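/- The triples ρ_1, ..., ρ_{m−1} form a ℂ-basis of the homogeneous degree d−2 part of D₀(f): they are linearly independent over ℂ, and every element (a,b,c) ∈ D₀(f) whose components a, b, c are homogeneous of degree d−2 is a ℂ-linear combination of ρ_1, ..., ρ_{m−1}. -/

import Mathlib

open MvPolynomial

noncomputable abbrev S : Type := MvPolynomial (Fin 3) ℂ

/-- The gradient `∇g = (g_x, g_y, g_z)` of a polynomial `g ∈ S = ℂ[x,y,z]`. -/
noncomputable def grad (g : S) : Fin 3 → S := fun t => pderiv t g

/-- The syzygy triple `ρ_j = Σ_{i≠j} (∏_{k≠i,j} f_k) (∇f_i × ∇f_j)`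
of the 2-form `ω_j = df ∧ df_j/f_j`. -/
noncomputable def rho {m : ℕ} (F : Fin m → S) (j : Fin m) : Fin 3 → S :=
  ∑ i ∈ Finset.univ.erase j,
    (∏ k ∈ (Finset.univ.erase j).erase i, F k) • crossProduct (grad (F i)) (grad (F j))

/-- The Jacobian syzygy module `D₀(f) = {(a,b,c) ∈ S³ : a f_x + b f_y + c f_z = 0}`. -/
noncomputable def D0 (f : S) : Submodule S (Fin 3 → S) where
  carrier := {v | ∑ t, v t * pderiv t f = 0}
  add_mem' {a b} ha hb := by
    simp only [Set.mem_setOf_eq, Pi.add_apply, add_mul, Finset.sum_add_distrib] at *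
    rw [ha, hb, add_zero]
  zero_mem' := by simp
  smul_mem' c v hv := by
    simp only [Set.mem_setOf_eq, Pi.smul_apply, smul_eq_mul, mul_assoc, ← Finset.mul_sum] at *
    rw [hv, mul_zero]

/-- The syzygy triple `σ^x = (0, f_z, −f_y)` of the 2-form `df ∧ dx`. -/
noncomputable def sigx (f : S) : Fin 3 → S := ![0, pderiv 2 f, -pderiv 1 f]
/-- The syzygy triple `σ^y = (−f_z, 0, f_x)` of the 2-form `df ∧ dy`. -/
noncomputable def sigy (f : S) : Fin 3 → S := ![-pderiv 2 f, 0, pderiv 0 f]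
/-- The syzygy triple `σ^z = (f_y, −f_x, 0)` of the 2-form `df ∧ dz`. -/
noncomputable def sigz (f : S) : Fin 3 → S := ![pderiv 1 f, -pderiv 0 f, 0]


/-- Exactness of the Koszul complex of three polynomials in the middle, plus coprimality. -/
def KoszulGood (A : Fin 3 → S) : Prop :=
  A 0 ≠ 0 ∧ IsRelPrime (A 0) (A 1) ∧
  ∀ s : Fin 3 → S, A 0 * s 0 + A 1 * s 1 + A 2 * s 2 = 0 →
    ∃ r : Fin 3 → S, s 0 = A 1 * r 2 - A 2 * r 1 ∧ s 1 = A 2 * r 0 - A 0 * r 2 ∧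
      s 2 = A 0 * r 1 - A 1 * r 0

lemma relPrime_X_pow (N : ℕ) {i j : Fin 3} (h : i ≠ j) :
    IsRelPrime ((X i : S) ^ N) ((X j : S) ^ N) := by
  apply IsRelPrime.pow
  refine (MvPolynomial.X_prime (i := i)).irreducible.isRelPrime_iff_not_dvd.mpr ?_
  rw [MvPolynomial.X_dvd_X]
  exact h

lemma koszulGood_X_pow (N : ℕ) : KoszulGood (fun k => (X k : S) ^ N) := by
  have hrel : IsRelPrime ((X 0 : S) ^ N) ((X 1 : S) ^ N) := relPrime_X_pow N (by decide)
  have h0 : (X 0 : S) ^ N ≠ 0 := pow_ne_zero _ (X_ne_zero 0)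
  refine ⟨h0, hrel, ?_⟩
  intro s hs
  simp only at hs ⊢
  have hset : ({(X 0 : S) ^ N, (X 1 : S) ^ N} : Set S) =
      (fun s => monomial s (1 : ℂ)) '' {Finsupp.single 0 N, Finsupp.single 1 N} := by
    simp [Set.image_pair, X_pow_eq_monomial]
  have hmem : s 2 * (X 2 : S) ^ N ∈ Ideal.span ({(X 0 : S) ^ N, (X 1 : S) ^ N} : Set S) := by
    rw [Ideal.mem_span_pair]
    exact ⟨- s 0, - s 1, by linear_combination -hs⟩
  have hmem2 : s 2 ∈ Ideal.span ({(X 0 : S) ^ N, (X 1 : S) ^ N} : Set S) := by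
    rw [hset, mem_ideal_span_monomial_image] at hmem ⊢
    intro xi hxi
    have h2 : xi + Finsupp.single 2 N ∈ (s 2 * (X 2 : S) ^ N).support := by
      rw [mem_support_iff, X_pow_eq_monomial, coeff_mul_monomial, mul_one]
      exact mem_support_iff.mp hxi
    obtain ⟨si, hsi, hle⟩ := hmem _ h2
    refine ⟨si, hsi, ?_⟩
    rcases hsi with rfl | rfl
    · rw [Finsupp.single_le_iff] at hle ⊢
      simpa using hle
    · rw [Finsupp.single_le_iff] at hle ⊢
      simpa using hle
  rw [Ideal.mem_span_pair] at hmem2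
  obtain ⟨a, b, hab⟩ := hmem2
  have h3 : (X 0 : S) ^ N * (s 0 + X 2 ^ N * a) = (X 1 : S) ^ N * (-(s 1 + X 2 ^ N * b)) := by
    linear_combination hs + X 2 ^ N * hab
  obtain ⟨k, hk⟩ := hrel.dvd_of_dvd_mul_left ⟨_, h3.symm⟩
  refine ⟨![-b, a, k], ?_, ?_, ?_⟩
  · change s 0 = X 1 ^ N * k - X 2 ^ N * a
    apply mul_left_cancel₀ h0
    linear_combination h3 + X 1 ^ N * hk
  · simp
    linear_combination -hk
  · simp
    linear_combination -hab

lemma KoszulGood.cross {A : Fin 3 → S} (hA : KoszulGood A) (T : Fin 3 → S)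
    (h1 : A 1 * T 0 = A 0 * T 1) (h2 : A 2 * T 0 = A 0 * T 2) :
    ∃ c, ∀ t, T t = A t * c := by
  obtain ⟨h0, hr, -⟩ := hA
  obtain ⟨c, hc⟩ := hr.dvd_of_dvd_mul_left ⟨_, h1⟩
  refine ⟨c, ?_⟩
  have e1 : T 1 = A 1 * c := mul_left_cancel₀ h0 (by linear_combination -h1 + A 1 * hc)
  have e2 : T 2 = A 2 * c := mul_left_cancel₀ h0 (by linear_combination -h2 + A 2 * hc)
  intro t
  fin_cases t
  · exact hc
  · exact e1
  · exact e2

lemma nullst (I : Ideal S) (hI : ∀ p : Fin 3 → ℂ, (∀ q ∈ I, eval p q = 0) → p = 0) :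
    ∃ A : Fin 3 → S, KoszulGood A ∧ ∀ k, A k ∈ I := by
  have h : ∀ k : Fin 3, ∃ n, (X k : S) ^ n ∈ I := by
    intro k
    have : (X k : S) ∈ I.radical := by
      rw [← MvPolynomial.vanishingIdeal_zeroLocus_eq_radical (K := ℂ), mem_vanishingIdeal_iff]
      intro p hp
      have : p = 0 := hI p (fun q hq => by simpa [aeval_eq_eval] using hp q hq)
      simp [this]
    exact this
  choose n hn using h
  refine ⟨fun k => X k ^ (∑ i, n i), koszulGood_X_pow _, fun k => ?_⟩
  exact Ideal.pow_mem_of_pow_mem _ (hn k)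
    (Finset.single_le_sum (f := n) (fun _ _ => Nat.zero_le _) (Finset.mem_univ k))

/-- three polynomials with only the origin as common zero -/
def OnlyOrigin (g : Fin 3 → S) : Prop := ∀ p : Fin 3 → ℂ, (∀ t, eval p (g t) = 0) → p = 0

lemma OnlyOrigin.exists_coeffs {g : Fin 3 → S} (hg : OnlyOrigin g) :
    ∃ A : Fin 3 → S, KoszulGood A ∧ ∃ al : Fin 3 → Fin 3 → S,
      ∀ k, A k = al k 0 * g 0 + al k 1 * g 1 + al k 2 * g 2 := by
  obtain ⟨A, hA, hAI⟩ := nullst (Ideal.span (Set.range g)) (fun p hp => hg p (fun t =>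
    hp _ (Ideal.subset_span ⟨t, rfl⟩)))
  have : ∀ k, ∃ c : Fin 3 → S, A k = c 0 * g 0 + c 1 * g 1 + c 2 * g 2 := by
    intro k
    obtain ⟨c, hc⟩ := (Ideal.mem_span_range_iff_exists_fun).mp (hAI k)
    exact ⟨c, by rw [← hc, Fin.sum_univ_three]⟩
  choose al hal using this
  exact ⟨A, hA, al, hal⟩

lemma all_pairs (w g : Fin 3 → S) (e01 : w 0 * g 1 = w 1 * g 0) (e12 : w 1 * g 2 = w 2 * g 1)
    (e20 : w 2 * g 0 = w 0 * g 2) (i j : Fin 3) : w i * g j = w j * g i := by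
  fin_cases i <;> fin_cases j
  · rfl
  · exact e01
  · exact e20.symm
  · exact e01.symm
  · rfl
  · exact e12
  · exact e20
  · exact e12.symm
  · rfl

lemma OnlyOrigin.parallel {g : Fin 3 → S} (hg : OnlyOrigin g) (w : Fin 3 → S)
    (h : ∀ i j, w i * g j = w j * g i) : ∃ c, ∀ t, w t = c * g t := by
  obtain ⟨A, ⟨h0, hr, -⟩, al, hal⟩ := hg.exists_coeffs
  have key : ∀ k t, A k * w t = (al k 0 * w 0 + al k 1 * w 1 + al k 2 * w 2) * g t := by
    intro k t
    rw [hal]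
    linear_combination al k 0 * h t 0 + al k 1 * h t 1 + al k 2 * h t 2
  obtain ⟨t, ht⟩ : ∃ t, g t ≠ 0 := by
    by_contra hcon
    push Not at hcon
    exact h0 (by rw [hal, hcon, hcon, hcon]; ring)
  have e : A 1 * (al 0 0 * w 0 + al 0 1 * w 1 + al 0 2 * w 2) =
      A 0 * (al 1 0 * w 0 + al 1 1 * w 1 + al 1 2 * w 2) :=
    mul_right_cancel₀ ht (by linear_combination A 0 * key 1 t - A 1 * key 0 t)
  obtain ⟨c, hc⟩ := hr.dvd_of_dvd_mul_left ⟨_, e⟩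
  refine ⟨c, fun t => mul_left_cancel₀ h0 ?_⟩
  rw [key, hc]
  ring

lemma OnlyOrigin.koszul {g : Fin 3 → S} (hg : OnlyOrigin g) (u : Fin 3 → S)
    (h : u 0 * g 0 + u 1 * g 1 + u 2 * g 2 = 0) :
    ∃ T : Fin 3 → S, u 0 = g 1 * T 2 - g 2 * T 1 ∧ u 1 = g 2 * T 0 - g 0 * T 2 ∧
      u 2 = g 0 * T 1 - g 1 * T 0 := by
  obtain ⟨A, hA, al, hal⟩ := hg.exists_coeffs
  have hA' := hA
  obtain ⟨h0, hr, hK⟩ := hA'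
  obtain ⟨T, hT⟩ : ∃ T : Fin 3 → Fin 3 → S, ∀ k,
      T k 0 = u 1 * al k 2 - u 2 * al k 1 ∧ T k 1 = u 2 * al k 0 - u 0 * al k 2 ∧
      T k 2 = u 0 * al k 1 - u 1 * al k 0 :=
    ⟨fun k => ![u 1 * al k 2 - u 2 * al k 1, u 2 * al k 0 - u 0 * al k 2,
      u 0 * al k 1 - u 1 * al k 0], fun k => by simp⟩
  have hu0 : ∀ k, A k * u 0 = g 1 * T k 2 - g 2 * T k 1 := fun k => by
    obtain ⟨a, b, c⟩ := hT k
    rw [b, c, hal]; linear_combination al k 0 * h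
  have hu1 : ∀ k, A k * u 1 = g 2 * T k 0 - g 0 * T k 2 := fun k => by
    obtain ⟨a, b, c⟩ := hT k
    rw [a, c, hal]; linear_combination al k 1 * h
  have hu2 : ∀ k, A k * u 2 = g 0 * T k 1 - g 1 * T k 0 := fun k => by
    obtain ⟨a, b, c⟩ := hT k
    rw [a, b, hal]; linear_combination al k 2 * h
  have hs : ∀ k l, ∃ s, ∀ t, A l * T k t - A k * T l t = s * g t := by
    intro k l
    apply hg.parallel (fun t => A l * T k t - A k * T l t)
    have e01 : (A l * T k 0 - A k * T l 0) * g 1 = (A l * T k 1 - A k * T l 1) * g 0 := by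
      linear_combination A l * hu2 k - A k * hu2 l
    have e12 : (A l * T k 1 - A k * T l 1) * g 2 = (A l * T k 2 - A k * T l 2) * g 1 := by
      linear_combination A l * hu0 k - A k * hu0 l
    have e20 : (A l * T k 2 - A k * T l 2) * g 0 = (A l * T k 0 - A k * T l 0) * g 2 := by
      linear_combination A l * hu1 k - A k * hu1 l
    exact all_pairs _ _ e01 e12 e20
  obtain ⟨t, ht⟩ : ∃ t, g t ≠ 0 := by
    by_contra hcon
    push Not at hcon
    exact h0 (by rw [hal, hcon, hcon, hcon]; ring)
  obtain ⟨s2, hs2⟩ := hs 0 1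
  obtain ⟨s0, hs0⟩ := hs 1 2
  obtain ⟨s1, hs1⟩ := hs 2 0
  obtain ⟨r, hr0, hr1, hr2⟩ := hK ![s0, s1, s2] (show A 0 * s0 + A 1 * s1 + A 2 * s2 = 0 from mul_right_cancel₀ ht (by
    linear_combination -A 0 * hs0 t - A 1 * hs1 t - A 2 * hs2 t))
  simp at hr0 hr1 hr2
  have hcr : ∀ t, ∃ c, ∀ k, T k t + r k * g t = A k * c := by
    intro t
    apply hA.cross (fun k => T k t + r k * g t)
    · linear_combination hs2 t + g t * hr2
    · linear_combination -hs1 t - g t * hr1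
  choose c hc using hcr
  refine ⟨c, mul_left_cancel₀ h0 ?_, mul_left_cancel₀ h0 ?_, mul_left_cancel₀ h0 ?_⟩
  · linear_combination hu0 0 + g 1 * hc 2 0 - g 2 * hc 1 0
  · linear_combination hu1 0 + g 2 * hc 0 0 - g 0 * hc 2 0
  · linear_combination hu2 0 + g 0 * hc 1 0 - g 1 * hc 0 0

/-- saturation of a complete intersection ideal `(f₁, f₂)` -/
lemma saturated {f1 f2 a : S} (hrel : IsRelPrime f1 f2) (hf2 : f2 ≠ 0)
    (h : ∀ p : Fin 3 → ℂ,
      (∀ q, q * a ∈ Ideal.span ({f1, f2} : Set S) → eval p q = 0) → p = 0) :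
    a ∈ Ideal.span ({f1, f2} : Set S) := by
  obtain ⟨A, hA, hAI⟩ := nullst
    (Submodule.comap (LinearMap.mulRight S a) (Ideal.span ({f1, f2} : Set S)))
    (fun p hp => h p (fun q hq => hp q (by simpa using hq)))
  have hPQ : ∀ k, ∃ P Q, P * f1 + Q * f2 = A k * a := by
    intro k
    have := hAI k
    rw [Submodule.mem_comap, LinearMap.mulRight_apply, Ideal.mem_span_pair] at this
    exact this
  choose P Q hPQ using hPQ
  have hA' := hA
  obtain ⟨h0, hr, hK⟩ := hA'
  have hs : ∀ k l, ∃ s, A l * P k - A k * P l = f2 * s := by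
    intro k l
    apply hrel.symm.dvd_of_dvd_mul_left
    exact ⟨A k * Q l - A l * Q k, by linear_combination A l * hPQ k - A k * hPQ l⟩
  obtain ⟨s2, hs2⟩ := hs 0 1
  obtain ⟨s0, hs0⟩ := hs 1 2
  obtain ⟨s1, hs1⟩ := hs 2 0
  obtain ⟨r, hr0, hr1, hr2⟩ := hK ![s0, s1, s2] (show A 0 * s0 + A 1 * s1 + A 2 * s2 = 0 from mul_left_cancel₀ hf2 (by
    linear_combination -A 0 * hs0 - A 1 * hs1 - A 2 * hs2))
  simp at hr0 hr1 hr2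
  obtain ⟨p, hp⟩ := hA.cross (fun k => P k + r k * f2)
    (by linear_combination hs2 + f2 * hr2) (by linear_combination -hs1 - f2 * hr1)
  have hQ : ∀ k, A k * (a - p * f1) = f2 * (Q k - r k * f1) := by
    intro k
    linear_combination -hPQ k + f1 * hp k
  have e : f2 * (A 1 * (Q 0 - r 0 * f1)) = f2 * (A 0 * (Q 1 - r 1 * f1)) := by
    linear_combination -A 1 * hQ 0 + A 0 * hQ 1
  obtain ⟨q, hq⟩ := hr.dvd_of_dvd_mul_left ⟨_, mul_left_cancel₀ hf2 e⟩
  rw [Ideal.mem_span_pair]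
  refine ⟨p, q, mul_left_cancel₀ h0 ?_⟩
  linear_combination -hQ 0 - f2 * hq


lemma minors_ne {a b : Fin 3 → ℂ} (h : LinearIndependent ℂ ![a, b])
    (h' : ∀ r s, a r * b s - a s * b r = 0) : False := by
  rw [← crossProduct_ne_zero_iff_linearIndependent] at h
  apply h
  rw [cross_apply]
  ext t
  fin_cases t
  · simpa using h' 1 2
  · simpa using h' 2 0
  · simpa using h' 0 1

lemma relPrime_of_nc {f1 f2 : S} (hnc : ∀ p : Fin 3 → ℂ, p ≠ 0 →
      eval p f1 = 0 → eval p f2 = 0 →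
      LinearIndependent ℂ
        ![fun t => eval p (pderiv t f1), fun t => eval p (pderiv t f2)]) :
    IsRelPrime f1 f2 := by
  intro q h1 h2
  obtain ⟨A, ⟨-, hr, -⟩, hA⟩ := nullst (Ideal.span {q}) (fun p hp => by
    have hq : eval p q = 0 := hp q (Ideal.mem_span_singleton_self q)
    by_contra hne
    obtain ⟨a, rfl⟩ := h1
    obtain ⟨b, rfl⟩ := h2
    refine minors_ne (hnc p hne (by simp [hq]) (by simp [hq])) (fun r s => ?_)
    simp [Derivation.leibniz, hq]
    ring)
  exact hr (Ideal.mem_span_singleton.mp (hA 0)) (Ideal.mem_span_singleton.mp (hA 1))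

attribute [local instance] MvPolynomial.gradedAlgebra

lemma homComp_mul {p q : S} {n : ℕ} (k : ℕ) (hq : q.IsHomogeneous n) :
    homogeneousComponent (k + n) (p * q) = homogeneousComponent k p * q := by
  have := DirectSum.coe_decompose_mul_add_of_right_mem (homogeneousSubmodule (Fin 3) ℂ)
    (i := k) (j := n) (a := p) (b := q) hq
  rw [← decomposition.decompose'_apply, ← decomposition.decompose'_apply]
  exact this

lemma homComp_dvd {p q : S} {n : ℕ} (k : ℕ) (hq : q.IsHomogeneous n) (h : q ∣ p) :
    q ∣ homogeneousComponent k p := by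
  rw [← Ideal.mem_span_singleton] at h ⊢
  refine homogeneousComponent_mem_of_mem (Ideal.homogeneous_span _ _ ?_) h k
  rintro x rfl
  exact ⟨n, hq⟩

lemma hom_eq_zero_of_dvd {p q : S} {n k : ℕ} (hq : q.IsHomogeneous n) (hq0 : q ≠ 0)
    (hp : p.IsHomogeneous k) (hk : k < n) (h : q ∣ p) : p = 0 := by
  obtain ⟨r, rfl⟩ := h
  by_contra hne
  have hr0 : r ≠ 0 := right_ne_zero_of_mul hne
  have h1 := totalDegree_mul_of_isDomain hq0 hr0
  rw [hp.totalDegree hne, hq.totalDegree hq0] at h1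
  omega

lemma euler {f : S} {e : ℕ} (hf : f.IsHomogeneous e) :
    X 0 * pderiv 0 f + X 1 * pderiv 1 f + X 2 * pderiv 2 f = (e : S) * f := by
  have := hf.sum_X_mul_pderiv
  rw [Fin.sum_univ_three, nsmul_eq_mul] at this
  exact this

/-- `w = v × x` -/
noncomputable def crX (v : Fin 3 → S) : Fin 3 → S :=
  ![v 1 * X 2 - v 2 * X 1, v 2 * X 0 - v 0 * X 2, v 0 * X 1 - v 1 * X 0]

lemma residue_exists {f : S} {e : ℕ} (hf : f.IsHomogeneous e) (hg : OnlyOrigin (grad f))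
    (v : Fin 3 → S) (h : S)
    (hv : v 0 * pderiv 0 f + v 1 * pderiv 1 f + v 2 * pderiv 2 f = f * h) :
    ∃ (a : S) (T : Fin 3 → S), ∀ t, crX v t = a * pderiv t f + f * T t := by
  have hE := euler hf
  obtain ⟨T, h0, h1, h2⟩ := hg.koszul (fun t => (e : S) * v t - h * X t) (by
    simp only [grad]
    linear_combination (e : S) * hv - h * hE)
  simp only [grad] at h0 h1 h2
  obtain ⟨a, ha⟩ := hg.parallel (fun t => crX v t - f * T t) (all_pairs _ _
    (by simp [grad, crX]; linear_combination -f * h2 - v 2 * hE + X 2 * hv)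
    (by simp [grad, crX]; linear_combination -f * h0 - v 0 * hE + X 0 * hv)
    (by simp [grad, crX]; linear_combination -f * h1 - v 1 * hE + X 1 * hv))
  exact ⟨a, T, fun t => by
    have h := ha t
    simp only [grad] at h
    linear_combination h⟩

lemma residue_divisible {m : ℕ} {F : Fin m → S}
    (hF0 : ∀ j, F j ≠ 0)
    (hnc : ∀ i j : Fin m, i ≠ j → ∀ p : Fin 3 → ℂ, p ≠ 0 →
      eval p (F i) = 0 → eval p (F j) = 0 →
      LinearIndependent ℂ
        ![fun t => eval p (pderiv t (F i)), fun t => eval p (pderiv t (F j))])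
    (htriple : ∀ i j k : Fin m, i ≠ j → i ≠ k → j ≠ k → ∀ p : Fin 3 → ℂ, p ≠ 0 →
      ¬(eval p (F i) = 0 ∧ eval p (F j) = 0 ∧ eval p (F k) = 0))
    (w : Fin 3 → S) (a : Fin m → S) (T : Fin m → Fin 3 → S)
    (hw : ∀ i t, w t = a i * pderiv t (F i) + F i * T i t) (j : Fin m) (s : Finset (Fin m)) :
    j ∉ s → ∃ b c, a j = b * (∏ i ∈ s, F i) + c * F j := by
  induction s using Finset.induction_on with
  | empty => intro _; exact ⟨a j, 0, by simp⟩
  | insert i s his ih =>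
    intro hj
    rw [Finset.mem_insert, not_or] at hj
    obtain ⟨hji, hjs⟩ := hj
    obtain ⟨b, c, hbc⟩ := ih hjs
    have hb : b ∈ Ideal.span ({F i, F j} : Set S) := by
      apply saturated (relPrime_of_nc (hnc i j (Ne.symm hji))) (hF0 j)
      intro p hp
      by_contra hne
      have hi0 := hp (F i) (Ideal.mul_mem_right _ _ (Ideal.subset_span (by simp)))
      have hj0 := hp (F j) (Ideal.mul_mem_right _ _ (Ideal.subset_span (by simp)))
      refine minors_ne (hnc j i hji p hne hj0 hi0) (fun r q => ?_)
      have h1 := hp ((∏ i ∈ s, F i) * (pderiv r (F j) * pderiv q (F i)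
          - pderiv q (F j) * pderiv r (F i))) (by
        rw [Ideal.mem_span_pair]
        refine ⟨T i r * pderiv q (F i) - T i q * pderiv r (F i),
          -(T j r * pderiv q (F i) - T j q * pderiv r (F i)) -
            c * (pderiv r (F j) * pderiv q (F i) - pderiv q (F j) * pderiv r (F i)), ?_⟩
        have e1 := (hw i r).symm.trans (hw j r)
        have e2 := (hw i q).symm.trans (hw j q)
        linear_combination pderiv q (F i) * e1 - pderiv r (F i) * e2 +
          (pderiv r (F j) * pderiv q (F i) - pderiv q (F j) * pderiv r (F i)) * hbc)
      rw [map_mul, mul_eq_zero] at h1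
      rcases h1 with h1 | h1
      · rw [map_prod, Finset.prod_eq_zero_iff] at h1
        obtain ⟨k, hk, hk0⟩ := h1
        exact absurd ⟨hi0, hj0, hk0⟩ (htriple i j k (Ne.symm hji) (by rintro rfl; exact his hk)
          (by rintro rfl; exact hjs hk) p hne)
      · simpa using h1
    rw [Ideal.mem_span_pair] at hb
    obtain ⟨x, y, hxy⟩ := hb
    refine ⟨x, c + y * ∏ i ∈ s, F i, ?_⟩
    rw [Finset.prod_insert his]
    linear_combination hbc - (∏ i ∈ s, F i) * hxy

lemma pderiv_prod {m : ℕ} (F : Fin m → S) (t : Fin 3) :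
    pderiv t (∏ i, F i) = ∑ i, (∏ k ∈ Finset.univ.erase i, F k) * pderiv t (F i) := by
  have key : ∀ s : Finset (Fin m), pderiv t (∏ i ∈ s, F i) =
      ∑ i ∈ s, (∏ k ∈ s.erase i, F k) * pderiv t (F i) := by
    intro s
    induction s using Finset.induction_on with
    | empty => simp
    | insert i s his ih =>
      rw [Finset.prod_insert his, Derivation.leibniz, ih, Finset.sum_insert his,
        Finset.erase_insert his, smul_eq_mul, smul_eq_mul, Finset.mul_sum, add_comm]
      congr 1
      refine Finset.sum_congr rfl (fun j hj => ?_)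
      have hij : i ≠ j := by rintro rfl; exact his hj
      rw [Finset.erase_insert_of_ne hij, Finset.prod_insert (by simp [his])]
      ring
  exact key _

lemma prod_rho {m : ℕ} (F : Fin m → S) (j : Fin m) :
    (∏ i, F i) • rho F j =
      (∏ k ∈ Finset.univ.erase j, F k) • crossProduct (grad (∏ i, F i)) (grad (F j)) := by
  have hg : grad (∏ i, F i) = ∑ i, (∏ k ∈ Finset.univ.erase i, F k) • grad (F i) := by
    ext1 t
    simp [grad, pderiv_prod]
  rw [hg, rho, map_sum, LinearMap.sum_apply, ← Finset.add_sum_erase _ _ (Finset.mem_univ j)]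
  simp only [map_smul, LinearMap.smul_apply, cross_self, smul_zero, zero_add, Finset.smul_sum,
    smul_smul]
  refine Finset.sum_congr rfl (fun i hi => ?_)
  congr 1
  have hij : i ≠ j := Finset.ne_of_mem_erase hi
  rw [← Finset.mul_prod_erase Finset.univ F (Finset.mem_univ i),
    ← Finset.mul_prod_erase (Finset.univ.erase j) F hi]
  ring


lemma dot_dvd {m : ℕ} {F : Fin m → S} (hrel : ∀ i j, i ≠ j → IsRelPrime (F i) (F j))
    (y : Fin m → S) (hy : ∑ i, (∏ k ∈ Finset.univ.erase i, F k) * y i = 0) (j : Fin m) :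
    F j ∣ y j := by
  have h1 : IsRelPrime (F j) (∏ k ∈ Finset.univ.erase j, F k) :=
    IsRelPrime.prod_right (fun i hi => hrel j i (Finset.ne_of_mem_erase hi).symm)
  apply h1.dvd_of_dvd_mul_left
  rw [← Finset.add_sum_erase _ _ (Finset.mem_univ j)] at hy
  rw [eq_neg_of_add_eq_zero_left hy, dvd_neg]
  refine Finset.dvd_sum (fun i hi => Dvd.dvd.mul_right (Finset.dvd_prod_of_mem F ?_) _)
  simpa using (Finset.ne_of_mem_erase hi).symm

lemma cross_grad_crX {f : S} {d : ℕ} (hf : f.IsHomogeneous d) (v : Fin 3 → S)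
    (hv : v 0 * pderiv 0 f + v 1 * pderiv 1 f + v 2 * pderiv 2 f = 0) :
    crossProduct (grad f) (crX v) = f • ((d : S) • v) := by
  have hE := euler hf
  rw [cross_apply]
  ext1 t
  fin_cases t
  · simp [grad, crX]
    linear_combination v 0 * hE - X 0 * hv
  · simp [grad, crX]
    linear_combination v 1 * hE - X 1 * hv
  · simp [grad, crX]
    linear_combination v 2 * hE - X 2 * hv

lemma span_all {m : ℕ} (hm : 2 ≤ m) (F : Fin m → S) (e : Fin m → ℕ)
    (he : ∀ j, 1 ≤ e j)
    (hhom : ∀ j, (F j).IsHomogeneous (e j))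
    (hF0 : ∀ j, F j ≠ 0)
    (hsmooth : ∀ j, OnlyOrigin (grad (F j)))
    (hnc : ∀ i j : Fin m, i ≠ j → ∀ p : Fin 3 → ℂ, p ≠ 0 →
      eval p (F i) = 0 → eval p (F j) = 0 →
      LinearIndependent ℂ
        ![fun t => eval p (pderiv t (F i)), fun t => eval p (pderiv t (F j))])
    (htriple : ∀ i j k : Fin m, i ≠ j → i ≠ k → j ≠ k → ∀ p : Fin 3 → ℂ, p ≠ 0 →
      ¬(eval p (F i) = 0 ∧ eval p (F j) = 0 ∧ eval p (F k) = 0))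
    (v : Fin 3 → S) (hv : ∑ t, v t * pderiv t (∏ i, F i) = 0)
    (hvh : ∀ t, (v t).IsHomogeneous ((∑ i, e i) - 2)) :
    ∃ c : Fin m → ℂ, v = ∑ j, c j • rho F j := by
  have hrel : ∀ i j, i ≠ j → IsRelPrime (F i) (F j) := fun i j h => relPrime_of_nc (hnc i j h)
  have hd : 2 ≤ ∑ i, e i := by
    calc 2 ≤ m := hm
      _ = ∑ i : Fin m, 1 := by simp
      _ ≤ _ := Finset.sum_le_sum (fun i _ => he i)
  have hf : (∏ i, F i).IsHomogeneous (∑ i, e i) :=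
    IsHomogeneous.prod _ _ _ (fun i _ => hhom i)
  have hf0 : (∏ i, F i) ≠ 0 := Finset.prod_ne_zero_iff.mpr (fun i _ => hF0 i)
  have hP : ∀ j t, ((∏ k ∈ Finset.univ.erase j, F k) * pderiv t (F j)).IsHomogeneous
      ((∑ i, e i) - 1) := by
    intro j t
    have h1 := (IsHomogeneous.prod (Finset.univ.erase j) F e (fun i _ => hhom i)).mul
      (IsHomogeneous.pderiv (i := t) (hhom j))
    have h2 := Finset.add_sum_erase Finset.univ e (Finset.mem_univ j)
    have h3 := he j
    convert h1 using 1
    omega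
  have hdiv : ∀ j, F j ∣ ∑ t, v t * pderiv t (F j) := by
    refine dot_dvd hrel (fun j => ∑ t, v t * pderiv t (F j)) ?_
    rw [← hv]
    simp only [pderiv_prod, Finset.mul_sum]
    rw [Finset.sum_comm]
    refine Finset.sum_congr rfl (fun _ _ => Finset.sum_congr rfl (fun _ _ => by ring))
  choose h hh using hdiv
  have hres : ∀ j, ∃ (a : S) (T : Fin 3 → S), ∀ t, crX v t = a * pderiv t (F j) + F j * T t :=
    fun j => residue_exists (hhom j) (hsmooth j) v (h j) (by
      rw [← hh j, Fin.sum_univ_three])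
  choose a T haT using hres
  have hb : ∀ j, ∃ b c, a j = b * (∏ k ∈ Finset.univ.erase j, F k) + c * F j := fun j =>
    residue_divisible hF0 hnc htriple (crX v) a T haT j _ (Finset.notMem_erase j _)
  choose b c hbc using hb
  have hwh : ∀ t, (crX v t).IsHomogeneous ((∑ i, e i) - 1) := by
    have h2 : ∀ i j, (v i * X j).IsHomogeneous ((∑ i, e i) - 1) := by
      intro i j
      have := (hvh i).mul (isHomogeneous_X ℂ j)
      convert this using 1
      omega
    intro t
    fin_cases t
    · exact (h2 1 2).sub (h2 2 1)
    · exact (h2 2 0).sub (h2 0 2)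
    · exact (h2 0 1).sub (h2 1 0)
  have hw1 : ∀ j t, F j ∣ crX v t - C (coeff 0 (b j)) *
      ((∏ k ∈ Finset.univ.erase j, F k) * pderiv t (F j)) := by
    intro j t
    have h1 : F j ∣ crX v t - b j * ((∏ k ∈ Finset.univ.erase j, F k) * pderiv t (F j)) :=
      ⟨c j * pderiv t (F j) + T j t, by
        linear_combination haT j t + pderiv t (F j) * hbc j⟩
    have h2 := homComp_dvd ((∑ i, e i) - 1) (hhom j) h1
    have h3 := homComp_mul (p := b j) 0 (hP j t)
    rw [zero_add, homogeneousComponent_zero] at h3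
    rwa [map_sub, h3, homogeneousComponent_eq_self (hwh t)] at h2
  have hw2 : ∀ t, crX v t = ∑ k, C (coeff 0 (b k)) *
      ((∏ l ∈ Finset.univ.erase k, F l) * pderiv t (F k)) := by
    intro t
    rw [← sub_eq_zero]
    refine hom_eq_zero_of_dvd hf hf0 (k := (∑ i, e i) - 1) ?_ (by omega) ?_
    · refine (hwh t).sub (IsHomogeneous.sum _ _ _ (fun k _ => (hP k t).C_mul _))
    · refine Fintype.prod_dvd_of_isRelPrime (fun i j hij => hrel i j hij) (fun j => ?_)
      rw [← Finset.add_sum_erase _ _ (Finset.mem_univ j), ← sub_sub]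
      refine dvd_sub (hw1 j t) (Finset.dvd_sum (fun i hi => ?_))
      refine Dvd.dvd.mul_left (Dvd.dvd.mul_right (Finset.dvd_prod_of_mem F ?_) _) _
      simpa using (Finset.ne_of_mem_erase hi).symm
  have hw3 : crX v = ∑ k, coeff 0 (b k) • ((∏ l ∈ Finset.univ.erase k, F l) • grad (F k)) := by
    ext1 t
    rw [hw2, Finset.sum_apply]
    refine Finset.sum_congr rfl (fun k _ => ?_)
    simp [grad, smul_eq_C_mul]
  have hfin : (∏ i, F i) • (((∑ i, e i : ℕ) : S) • v) =
      (∏ i, F i) • ∑ k, coeff 0 (b k) • rho F k := by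
    rw [← cross_grad_crX hf v (by rw [← hv, Fin.sum_univ_three]), hw3, map_sum, Finset.smul_sum]
    refine Finset.sum_congr rfl (fun k _ => ?_)
    rw [smul_comm (∏ i, F i) _ (rho F k), prod_rho, LinearMap.map_smul_of_tower, map_smul]
  have hfin2 := smul_right_injective (Fin 3 → S) hf0 hfin
  have hd0 : ((∑ i, e i : ℕ) : ℂ) ≠ 0 := by
    rw [Nat.cast_ne_zero]; omega
  refine ⟨fun k => ((∑ i, e i : ℕ) : ℂ)⁻¹ * coeff 0 (b k), ?_⟩
  simp only [mul_smul]
  rw [← Finset.smul_sum, ← hfin2, Nat.cast_smul_eq_nsmul, ← Nat.cast_smul_eq_nsmul ℂ, smul_smul,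
    inv_mul_cancel₀ hd0, one_smul]

lemma sum_rho {m : ℕ} (F : Fin m → S) (hF0 : ∀ j, F j ≠ 0) : ∑ j, rho F j = 0 := by
  have hf0 : (∏ i, F i) ≠ 0 := Finset.prod_ne_zero_iff.mpr (fun i _ => hF0 i)
  apply smul_right_injective (Fin 3 → S) hf0
  have hg : grad (∏ i, F i) = ∑ i, (∏ k ∈ Finset.univ.erase i, F k) • grad (F i) := by
    ext1 t
    simp [grad, pderiv_prod]
  simp only [Finset.smul_sum, prod_rho, smul_zero]
  simp only [← map_smul]
  rw [← map_sum, ← hg, cross_self]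

lemma indep_all {m : ℕ} (F : Fin m → S) (e : Fin m → ℕ)
    (he : ∀ j, 1 ≤ e j)
    (hhom : ∀ j, (F j).IsHomogeneous (e j))
    (hF0 : ∀ j, F j ≠ 0)
    (hsmooth : ∀ j, OnlyOrigin (grad (F j)))
    (hrel : ∀ i j, i ≠ j → IsRelPrime (F i) (F j))
    (c : Fin m → ℂ) (hc : ∑ j, c j • rho F j = 0) (j : Fin m) :
    ((∑ i, e i : ℕ) : ℂ) * c j = ∑ i, c i * e i := by
  have hf : (∏ i, F i).IsHomogeneous (∑ i, e i) :=
    IsHomogeneous.prod _ _ _ (fun i _ => hhom i)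
  have hf0 : (∏ i, F i) ≠ 0 := Finset.prod_ne_zero_iff.mpr (fun i _ => hF0 i)
  obtain ⟨W, hW⟩ : ∃ W : Fin 3 → S,
      W = ∑ k, c k • ((∏ l ∈ Finset.univ.erase k, F l) • grad (F k)) := ⟨_, rfl⟩
  have hWt : ∀ t, W t = ∑ k, C (c k) * ((∏ l ∈ Finset.univ.erase k, F l) * pderiv t (F k)) := by
    intro t
    rw [hW, Finset.sum_apply]
    refine Finset.sum_congr rfl (fun k _ => ?_)
    simp [grad, smul_eq_C_mul]
  have hcr : crossProduct (grad (∏ i, F i)) W = 0 := by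
    rw [← smul_zero (∏ i, F i), ← hc, hW, map_sum, Finset.smul_sum]
    refine Finset.sum_congr rfl (fun k _ => ?_)
    rw [smul_comm (∏ i, F i) _ (rho F k), prod_rho, LinearMap.map_smul_of_tower, map_smul]
  have hxW : X 0 * W 0 + X 1 * W 1 + X 2 * W 2 = C (∑ i, c i * e i) * ∏ i, F i := by
    simp only [hWt, Finset.mul_sum, map_sum, Finset.sum_mul]
    rw [← Finset.sum_add_distrib, ← Finset.sum_add_distrib]
    refine Finset.sum_congr rfl (fun k _ => ?_)
    rw [← Finset.mul_prod_erase Finset.univ F (Finset.mem_univ k), map_mul]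
    have := euler (hhom k)
    simp only [map_natCast]
    linear_combination C (c k) * (∏ l ∈ Finset.univ.erase k, F l) * this
  have hE := euler hf
  have hkey : ∀ t, ((∑ i, e i : ℕ) : S) * W t = C (∑ i, c i * e i) * pderiv t (∏ i, F i) := by
    rw [cross_apply] at hcr
    have h0 := congrFun hcr 0
    have h1 := congrFun hcr 1
    have h2 := congrFun hcr 2
    simp [grad] at h0 h1 h2
    intro t
    apply mul_left_cancel₀ hf0
    fin_cases t
    · change _ * (_ * W 0) = _ * (_ * pderiv 0 _)
      linear_combination -W 0 * hE + pderiv 0 (∏ i, F i) * hxW - X 1 * h2 + X 2 * h1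
    · change _ * (_ * W 1) = _ * (_ * pderiv 1 _)
      linear_combination -W 1 * hE + pderiv 1 (∏ i, F i) * hxW + X 0 * h2 - X 2 * h0
    · change _ * (_ * W 2) = _ * (_ * pderiv 2 _)
      linear_combination -W 2 * hE + pderiv 2 (∏ i, F i) * hxW - X 0 * h1 + X 1 * h0
  by_contra hne
  have hne' : ((∑ i, e i : ℕ) : ℂ) * c j - ∑ i, c i * e i ≠ 0 := sub_ne_zero.mpr hne
  have hz : ∀ t, pderiv t (F j) = 0 := by
    intro t
    refine hom_eq_zero_of_dvd (hhom j) (hF0 j) (IsHomogeneous.pderiv (i := t) (hhom j))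
      (by have := he j; omega) ?_
    have hdv := dot_dvd hrel (fun k => C (((∑ i, e i : ℕ) : ℂ) * c k - ∑ i, c i * e i)
      * pderiv t (F k)) (by
      have := hkey t
      rw [hWt, pderiv_prod, Finset.mul_sum, Finset.mul_sum, ← sub_eq_zero,
        ← Finset.sum_sub_distrib] at this
      rw [← this]
      refine Finset.sum_congr rfl (fun k _ => ?_)
      rw [map_sub, map_mul, map_natCast]
      ring) j
    have := Dvd.dvd.mul_left hdv (C (((∑ i, e i : ℕ) : ℂ) * c j - ∑ i, c i * e i)⁻¹)
    rwa [← mul_assoc, ← map_mul, inv_mul_cancel₀ hne', map_one, one_mul] at this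
  have h1 := hsmooth j 1 (fun t => by simp [grad, hz])
  simpa using congrFun h1 0



/-- `ρ_1, …, ρ_{m−1}` form a `ℂ`-basis of the homogeneous degree `d−2` part
of `D₀(f)`: they are `ℂ`-linearly independent, and every element of `D₀(f)` with components
homogeneous of degree `d−2` is a `ℂ`-linear combination of them. -/
theorem rho_basis_degree_d_sub_two
    (m : ℕ) (hm : 4 ≤ m) (F : Fin m → S) (e : Fin m → ℕ)
    (he : ∀ j, 1 ≤ e j)
    (hhom : ∀ j, (F j).IsHomogeneous (e j))
    (hsmooth : ∀ j, ∀ p : Fin 3 → ℂ,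
      (∀ t, eval p (pderiv t (F j)) = 0) → p = 0)
    (hnc : ∀ i j : Fin m, i ≠ j → ∀ p : Fin 3 → ℂ, p ≠ 0 →
      eval p (F i) = 0 → eval p (F j) = 0 →
      LinearIndependent ℂ
        ![fun t => eval p (pderiv t (F i)), fun t => eval p (pderiv t (F j))])
    (htriple : ∀ i j k : Fin m, i ≠ j → i ≠ k → j ≠ k → ∀ p : Fin 3 → ℂ, p ≠ 0 →
      ¬(eval p (F i) = 0 ∧ eval p (F j) = 0 ∧ eval p (F k) = 0)) :
    LinearIndependent ℂ (fun j : Fin (m - 1) => rho F (Fin.castLE (Nat.sub_le m 1) j)) ∧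
    (∀ v : Fin 3 → S, v ∈ D0 (∏ i, F i) →
      (∀ t, (v t).IsHomogeneous ((∑ i, e i) - 2)) →
      ∃ c : Fin (m - 1) → ℂ,
        v = ∑ j : Fin (m - 1), c j • rho F (Fin.castLE (Nat.sub_le m 1) j)) := by
  have hsm : ∀ j, OnlyOrigin (grad (F j)) := fun j p hp => hsmooth j p hp
  have hF0 : ∀ j, F j ≠ 0 := by
    intro j h0
    have h1 := hsmooth j 1 (fun t => by simp [h0])
    simpa using congrFun h1 0
  obtain ⟨n, rfl⟩ : ∃ n, m = n + 1 := ⟨m - 1, by omega⟩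
  have hcast : ∀ j : Fin n, Fin.castLE (Nat.sub_le (n + 1) 1) j = Fin.castSucc j := fun j => rfl
  constructor
  · change LinearIndependent ℂ (fun j : Fin n => rho F (Fin.castSucc j))
    rw [Fintype.linearIndependent_iff]
    intro g hg
    obtain ⟨c, hcl, hcs⟩ : ∃ c : Fin (n + 1) → ℂ, c (Fin.last n) = 0 ∧
        ∀ j : Fin n, c (Fin.castSucc j) = g j :=
      ⟨Fin.snoc g 0, by simp, by simp⟩
    have hc : ∑ j, c j • rho F j = 0 := by
      rw [Fin.sum_univ_castSucc, hcl, zero_smul, add_zero, ← hg]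
      simp only [hcs]
    have hall := indep_all F e he hhom hF0 hsm (fun i j h => relPrime_of_nc (hnc i j h)) c hc
    have hs := hall (Fin.last n)
    rw [hcl, mul_zero] at hs
    intro i
    have hi := hall (Fin.castSucc i)
    rw [← hs, hcs, mul_eq_zero] at hi
    refine hi.resolve_left ?_
    refine Nat.cast_ne_zero.mpr ?_
    have h1 := Finset.single_le_sum (f := e) (fun _ _ => Nat.zero_le _)
      (Finset.mem_univ (Fin.last n))
    have h2 := he (Fin.last n)
    omega
  · intro v hv hvh
    obtain ⟨c, hc⟩ := span_all (by omega) F e he hhom hF0 hsm hnc htriple v hv hvh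
    refine ⟨fun j : Fin n => c (Fin.castSucc j) - c (Fin.last n), ?_⟩
    change v = ∑ j : Fin n, (c (Fin.castSucc j) - c (Fin.last n)) • rho F (Fin.castSucc j)
    have h0 := sum_rho F hF0
    rw [Fin.sum_univ_castSucc] at h0 hc
    rw [hc, eq_neg_of_add_eq_zero_right h0]
    simp only [sub_smul, Finset.sum_sub_distrib, smul_neg, Finset.smul_sum]
    abel
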